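/- Let (p_k^{(1)}) and (p_k^{(2)}) be critical offspring distributions with variances σ_1², σ_2² ∈ (0,∞), pgfs Φ_1, Φ_2, and tree-size probabilities (q_n^{(1)}), (q_n^{(2)}). Suppose Φ_1(t) ≤ Φ_2(t) for all t ∈ (0,1) and Φ_1(t_0) < Φ_2(t_0) for at least one t_0 ∈ (0,1). Then: (i) for every real α < 0, ∑_{n≥1} n^α q_n^{(1)} < ∑_{n≥1} n^α q_n^{(2)}; (ii) for every real α with 0 < α < 1/2, ∑_{n≥1} n^α q_n^{(1)} > ∑_{n≥1} n^α q_n^{(2)}; (iii) ∑_{n≥1} q_n^{(1)} log n > ∑_{n≥1} q_n^{(2)} log n. -/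

import Mathlib

open MeasureTheory Set

/-- The generating function `∑ aₙ tⁿ` of a real sequence. -/
noncomputable def genFun (a : ℕ → ℝ) (t : ℝ) : ℝ := ∑' n, a n * t ^ n

/-- `q` is the tree-size law of a nondegenerate critical offspring law `p`. -/
structure IsTreeSizeLaw (p q : ℕ → ℝ) : Prop where
  offspring_nonneg : ∀ k, 0 ≤ p k
  offspring_tsum : ∑' k, p k = 1
  critical : ∑' k : ℕ, (k : ℝ) * p k = 1
  nondegenerate : ∃ k, 2 ≤ k ∧ 0 < p k
  zero : q 0 = 0
  nonneg : ∀ n, 0 ≤ q n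
  tsum_eq_one : ∑' n, q n = 1
  functional_eq : ∀ z ∈ Icc (0 : ℝ) 1, genFun q z = z * genFun p (genFun q z)

lemma summable_of_tsum_eq_one {a : ℕ → ℝ} (h : ∑' n, a n = 1) : Summable a := by
  by_contra hs
  simp [tsum_eq_zero_of_not_summable hs] at h

lemma summable_mul_pow {a : ℕ → ℝ} (ha : ∀ n, 0 ≤ a n) (hs : Summable a) {t : ℝ}
    (ht : t ∈ Icc (0 : ℝ) 1) : Summable fun n => a n * t ^ n :=
  hs.of_nonneg_of_le (fun n => mul_nonneg (ha n) (pow_nonneg ht.1 n))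
    fun n => mul_le_of_le_one_right (ha n) (pow_le_one₀ ht.1 ht.2)

lemma one_sub_le_pow {k : ℕ} (hk : 2 ≤ k) {t : ℝ} (ht : t ∈ Icc (0 : ℝ) 1) :
    1 + k * (t - 1) + (t - 1) ^ 2 ≤ t ^ k := by
  induction k, hk using Nat.le_induction with
  | base => norm_num; nlinarith
  | succ k hk ih =>
    have hk' : (2 : ℝ) ≤ k := by exact_mod_cast hk
    have h1 := mul_le_mul_of_nonneg_left ih ht.1
    rw [pow_succ' t k]
    push_cast
    refine le_trans ?_ h1
    have h2 : 0 ≤ (t - 1) ^ 2 * (k + (t - 1)) :=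
      mul_nonneg (sq_nonneg _) (by linarith [ht.1])
    nlinarith

lemma one_add_mul_le_pow_of_mem_Icc (k : ℕ) {t : ℝ} (ht : t ∈ Icc (0 : ℝ) 1) :
    1 + k * (t - 1) ≤ t ^ k := by
  have := one_add_mul_le_pow (a := t - 1) (by linarith [ht.1]) k
  simpa using this

namespace IsTreeSizeLaw

variable {p q : ℕ → ℝ}

lemma summable (h : IsTreeSizeLaw p q) : Summable q := summable_of_tsum_eq_one h.tsum_eq_one

lemma exists_pos (h : IsTreeSizeLaw p q) : ∃ n, n ≠ 0 ∧ 0 < q n := by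
  by_contra! hc
  have : ∀ n, q n = 0 := fun n => by
    by_cases hn : n = 0
    · rw [hn, h.zero]
    · exact le_antisymm (hc n hn) (h.nonneg n)
  simpa [this] using h.tsum_eq_one

lemma continuousOn (h : IsTreeSizeLaw p q) : ContinuousOn (genFun q) (Icc 0 1) := by
  refine continuousOn_tsum (u := q) (fun n => by fun_prop) h.summable fun n t ht => ?_
  rw [Real.norm_of_nonneg (mul_nonneg (h.nonneg n) (pow_nonneg ht.1 n))]
  exact mul_le_of_le_one_right (h.nonneg n) (pow_le_one₀ ht.1 ht.2)

lemma strictMonoOn (h : IsTreeSizeLaw p q) : StrictMonoOn (genFun q) (Icc 0 1) := by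
  intro s hs t ht hst
  obtain ⟨n, hn, hq⟩ := h.exists_pos
  exact Summable.tsum_lt_tsum (i := n)
    (fun m => mul_le_mul_of_nonneg_left (pow_le_pow_left₀ hs.1 hst.le m) (h.nonneg m))
    (mul_lt_mul_of_pos_left (pow_lt_pow_left₀ hst hs.1 hn) hq)
    (summable_mul_pow h.nonneg h.summable hs) (summable_mul_pow h.nonneg h.summable ht)

lemma genFun_zero (h : IsTreeSizeLaw p q) : genFun q 0 = 0 := by
  have := h.functional_eq 0 (by simp)
  simpa using this

lemma genFun_one (h : IsTreeSizeLaw p q) : genFun q 1 = 1 := by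
  simpa [genFun] using h.tsum_eq_one

lemma genFun_mem_Ioo (h : IsTreeSizeLaw p q) {z : ℝ} (hz : z ∈ Ioo (0 : ℝ) 1) :
    genFun q z ∈ Ioo (0 : ℝ) 1 := by
  constructor
  · simpa [h.genFun_zero] using h.strictMonoOn (by simp) (Ioo_subset_Icc_self hz) hz.1
  · simpa [h.genFun_one] using h.strictMonoOn (Ioo_subset_Icc_self hz) (by simp) hz.2

lemma genFun_le_self (h : IsTreeSizeLaw p q) {z : ℝ} (hz : z ∈ Icc (0 : ℝ) 1) :
    genFun q z ≤ z := by
  have hle : genFun q z ≤ ∑' n, q n * z := by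
    refine Summable.tsum_le_tsum (fun n => ?_) (summable_mul_pow h.nonneg h.summable hz)
      (h.summable.mul_right z)
    rcases eq_or_ne n 0 with rfl | hn
    · simp [h.zero]
    · exact mul_le_mul_of_nonneg_left (pow_le_of_le_one hz.1 hz.2 hn) (h.nonneg n)
  rwa [tsum_mul_right, h.tsum_eq_one, one_mul] at hle

lemma exists_genFun_eq (h : IsTreeSizeLaw p q) {t : ℝ} (ht : t ∈ Ioo (0 : ℝ) 1) :
    ∃ z ∈ Ioo (0 : ℝ) 1, genFun q z = t := by
  have := intermediate_value_Ioo zero_le_one h.continuousOn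
  rw [h.genFun_zero, h.genFun_one] at this
  exact this ht

/-- A quadratic lower bound for the offspring generating function near its fixed point. -/
lemma exists_add_sq_le (h : IsTreeSizeLaw p q) :
    ∃ c > 0, ∀ t ∈ Icc (0 : ℝ) 1, t + c * (1 - t) ^ 2 ≤ genFun p t := by
  obtain ⟨K, hK, hpK⟩ := h.nondegenerate
  refine ⟨p K, hpK, fun t ht => ?_⟩
  have hs := summable_of_tsum_eq_one h.offspring_tsum
  have hs' := summable_of_tsum_eq_one h.critical
  have hp : HasSum p 1 := h.offspring_tsum ▸ hs.hasSum
  have hk : HasSum (fun k : ℕ => (k : ℝ) * p k) 1 := h.critical ▸ hs'.hasSum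
  have hsum := (hp.add (hk.mul_right (t - 1))).add (hasSum_ite_eq K (p K * (1 - t) ^ 2))
  have hle := hasSum_le (fun k => ?_) hsum
    (summable_mul_pow h.offspring_nonneg hs ht).hasSum
  · simpa [genFun] using hle
  · by_cases hkK : k = K
    · subst hkK
      have := mul_le_mul_of_nonneg_left (one_sub_le_pow hK ht) hpK.le
      simp only [if_true]
      nlinarith
    · have := mul_le_mul_of_nonneg_left (one_add_mul_le_pow_of_mem_Icc k ht)
        (h.offspring_nonneg k)
      simp only [hkK, if_false]
      nlinarith

/-- `z - y(z) = O(z √(1 - z))` for the tree-size generating function `y`. -/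
lemma exists_sub_le_sqrt (h : IsTreeSizeLaw p q) :
    ∃ C, 0 ≤ C ∧ ∀ z ∈ Ioo (0 : ℝ) 1, z - genFun q z ≤ C * (z * √(1 - z)) := by
  obtain ⟨c, hc, hbd⟩ := h.exists_add_sq_le
  refine ⟨1 / √c, by positivity, fun z hz => ?_⟩
  have hy := h.genFun_mem_Ioo hz
  have hfe := h.functional_eq z (Ioo_subset_Icc_self hz)
  have hb := hbd _ (Ioo_subset_Icc_self hy)
  have hyz := h.genFun_le_self (Ioo_subset_Icc_self hz)
  set y := genFun q z
  have hmul := mul_le_mul_of_nonneg_left hb hz.1.le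
  rw [← hfe] at hmul
  have hsq : c * (1 - y) ^ 2 ≤ 1 - z := by
    have : z * (c * (1 - y) ^ 2) ≤ z * (1 - z) := by nlinarith [hz.2]
    exact le_of_mul_le_mul_left this hz.1
  have hroot : √c * (1 - y) ≤ √(1 - z) := by
    refine Real.le_sqrt_of_sq_le ?_
    rwa [mul_pow, Real.sq_sqrt hc.le]
  have h1 : 1 - y ≤ 1 / √c * √(1 - z) := by
    rw [one_div, inv_mul_eq_div, le_div_iff₀' (Real.sqrt_pos.2 hc)]
    exact hroot
  calc z - y ≤ z * (1 - y) := by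
        have : 0 ≤ z * (c * (1 - y) ^ 2) := by have := hz.1; positivity
        nlinarith
    _ ≤ z * (1 / √c * √(1 - z)) := mul_le_mul_of_nonneg_left h1 hz.1.le
    _ = _ := by ring

end IsTreeSizeLaw

section Comparison

variable {p₁ p₂ q₁ q₂ : ℕ → ℝ}

lemma exists_le_genFun_eq (h₁ : IsTreeSizeLaw p₁ q₁) (h₂ : IsTreeSizeLaw p₂ q₂)
    {z : ℝ} (hz : z ∈ Ioo (0 : ℝ) 1) :
    ∃ z' ∈ Ioo (0 : ℝ) 1, genFun q₂ z' = genFun q₁ z ∧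
      z' * genFun p₂ (genFun q₁ z) = z * genFun p₁ (genFun q₁ z) := by
  obtain ⟨z', hz', he⟩ := h₂.exists_genFun_eq (h₁.genFun_mem_Ioo hz)
  refine ⟨z', hz', he, ?_⟩
  have e₁ := h₁.functional_eq z (Ioo_subset_Icc_self hz)
  have e₂ := h₂.functional_eq z' (Ioo_subset_Icc_self hz')
  rw [he] at e₂
  rw [← e₁, ← e₂]

lemma genFun_le_genFun (h₁ : IsTreeSizeLaw p₁ q₁) (h₂ : IsTreeSizeLaw p₂ q₂)
    {z : ℝ} (hz : z ∈ Ioo (0 : ℝ) 1)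
    (hΦ : genFun p₁ (genFun q₁ z) ≤ genFun p₂ (genFun q₁ z)) :
    genFun q₁ z ≤ genFun q₂ z := by
  obtain ⟨z', hz', he, hmul⟩ := exists_le_genFun_eq h₁ h₂ hz
  have hpos : 0 < genFun p₁ (genFun q₁ z) := by
    have := (h₁.genFun_mem_Ioo hz).1
    rw [h₁.functional_eq z (Ioo_subset_Icc_self hz)] at this
    exact pos_of_mul_pos_right this hz.1.le
  rw [← he]
  refine h₂.strictMonoOn.monotoneOn (Ioo_subset_Icc_self hz') (Ioo_subset_Icc_self hz) ?_
  by_contra! hlt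
  have := mul_lt_mul_of_pos_right hlt hpos
  have := mul_le_mul_of_nonneg_left hΦ hz'.1.le
  linarith

lemma genFun_lt_genFun (h₁ : IsTreeSizeLaw p₁ q₁) (h₂ : IsTreeSizeLaw p₂ q₂)
    {z : ℝ} (hz : z ∈ Ioo (0 : ℝ) 1)
    (hΦ : genFun p₁ (genFun q₁ z) < genFun p₂ (genFun q₁ z)) :
    genFun q₁ z < genFun q₂ z := by
  refine lt_of_le_of_ne (genFun_le_genFun h₁ h₂ hz hΦ.le) fun he => ?_
  have e₁ := h₁.functional_eq z (Ioo_subset_Icc_self hz)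
  have e₂ := h₂.functional_eq z (Ioo_subset_Icc_self hz)
  rw [← he] at e₂
  have := mul_lt_mul_of_pos_left hΦ hz.1
  linarith

end Comparison

section LaplaceTransform

lemma ofReal_Gamma_mul_rpow_neg {a x : ℝ} (ha : 0 < a) (hx : 0 < x) :
    ENNReal.ofReal (Real.Gamma a * x ^ (-a)) =
      ∫⁻ s in Ioi (0 : ℝ), ENNReal.ofReal (s ^ (a - 1) * Real.exp (-(x * s))) := by
  have h := Real.integral_rpow_mul_exp_neg_mul_Ioi ha hx
  have hval : (1 / x) ^ a * Real.Gamma a = Real.Gamma a * x ^ (-a) := by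
    rw [one_div, Real.inv_rpow hx.le, Real.rpow_neg hx.le, mul_comm]
  rw [hval] at h
  have hne : Real.Gamma a * x ^ (-a) ≠ 0 :=
    (mul_pos (Real.Gamma_pos_of_pos ha) (Real.rpow_pos_of_pos hx _)).ne'
  rw [← h]
  refine ofReal_integral_eq_lintegral_ofReal (Integrable.of_integral_ne_zero (h ▸ hne)) ?_
  filter_upwards [ae_restrict_mem measurableSet_Ioi] with s hs
  exact mul_nonneg (Real.rpow_nonneg (le_of_lt hs) _) (Real.exp_nonneg _)

lemma lintegral_exp_neg_mul_Ioc {s x : ℝ} (hs : 0 < s) (hx : 1 ≤ x) :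
    ∫⁻ t in Ioc 1 x, ENNReal.ofReal (Real.exp (-(t * s))) =
      ENNReal.ofReal ((Real.exp (-s) - Real.exp (-(x * s))) / s) := by
  have hcont : Continuous fun t : ℝ => Real.exp (-(t * s)) := by fun_prop
  have hint : ∫ t in (1 : ℝ)..x, Real.exp (-(t * s)) =
      (Real.exp (-s) - Real.exp (-(x * s))) / s := by
    rw [intervalIntegral.integral_eq_sub_of_hasDerivAt
      (f := fun t => -(Real.exp (-(t * s)) / s)) (fun t _ => ?_)
      (hcont.intervalIntegrable 1 x)]
    · simp only [one_mul]; ring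
    · have hlin : HasDerivAt (fun t : ℝ => -(t * s)) (-s) t := by
        simpa using ((hasDerivAt_id t).mul_const s).fun_neg
      refine (hlin.exp.div_const s).fun_neg.congr_deriv ?_
      field_simp
  rw [← hint, intervalIntegral.integral_of_le hx]
  exact (ofReal_integral_eq_lintegral_ofReal
    (hcont.integrableOn_Ioc) (Filter.Eventually.of_forall fun t => Real.exp_nonneg _)).symm

lemma ofReal_Gamma_mul_integral_rpow_neg {a x : ℝ} (ha : 0 < a) (hx : 1 ≤ x) :
    ENNReal.ofReal (Real.Gamma a * ∫ t in (1 : ℝ)..x, t ^ (-a)) =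
      ∫⁻ s in Ioi (0 : ℝ),
        ENNReal.ofReal (s ^ (a - 2) * (Real.exp (-s) - Real.exp (-(x * s)))) := by
  have hint : IntegrableOn (fun t : ℝ => Real.Gamma a * t ^ (-a)) (Ioc 1 x) := by
    refine Integrable.const_mul (f := fun t : ℝ => t ^ (-a)) ?_ _
    refine (intervalIntegrable_iff_integrableOn_Ioc_of_le hx).1 ?_
    refine intervalIntegral.intervalIntegrable_rpow (Or.inr ?_)
    rw [uIcc_of_le hx]
    exact fun h => absurd h.1 (by norm_num)
  rw [← intervalIntegral.integral_const_mul, intervalIntegral.integral_of_le hx,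
    ofReal_integral_eq_lintegral_ofReal hint]
  · calc ∫⁻ t in Ioc 1 x, ENNReal.ofReal (Real.Gamma a * t ^ (-a))
        = ∫⁻ t in Ioc 1 x, ∫⁻ s in Ioi (0 : ℝ),
            ENNReal.ofReal (s ^ (a - 1) * Real.exp (-(t * s))) :=
          setLIntegral_congr_fun measurableSet_Ioc fun t ht =>
            ofReal_Gamma_mul_rpow_neg ha (zero_lt_one.trans ht.1)
      _ = ∫⁻ s in Ioi (0 : ℝ), ∫⁻ t in Ioc 1 x,
            ENNReal.ofReal (s ^ (a - 1) * Real.exp (-(t * s))) :=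
          lintegral_lintegral_swap (by unfold Function.uncurry; fun_prop)
      _ = _ := by
          refine setLIntegral_congr_fun measurableSet_Ioi fun s hs => ?_
          have hs' : 0 < s := hs
          have hw := Real.rpow_nonneg hs'.le (a - 1)
          simp only [ENNReal.ofReal_mul hw]
          rw [lintegral_const_mul _ (by fun_prop), lintegral_exp_neg_mul_Ioc hs' hx,
            ← ENNReal.ofReal_mul hw, show a - 1 = (a - 2) + 1 by ring,
            Real.rpow_add_one hs'.ne']
          congr 1
          field_simp
  · filter_upwards [ae_restrict_mem measurableSet_Ioc] with t ht
    exact mul_nonneg (Real.Gamma_pos_of_pos ha).le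
      (Real.rpow_nonneg (zero_le_one.trans ht.1.le) _)

end LaplaceTransform

lemma exp_neg_mem_Ioo {s : ℝ} (hs : 0 < s) : Real.exp (-s) ∈ Ioo (0 : ℝ) 1 :=
  ⟨Real.exp_pos _, by simpa using hs⟩

namespace IsTreeSizeLaw

variable {p q : ℕ → ℝ}

lemma mul_integral_nonneg (h : IsTreeSizeLaw p q) (a : ℝ) (n : ℕ) :
    0 ≤ q n * ∫ t in (1 : ℝ)..n, t ^ (-a) := by
  rcases Nat.eq_zero_or_pos n with rfl | hn
  · simp [h.zero]
  · exact mul_nonneg (h.nonneg n) (intervalIntegral.integral_nonneg (by exact_mod_cast hn)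
      fun t ht => Real.rpow_nonneg (zero_le_one.trans ht.1) _)

lemma tsum_ofReal_mul_exp_sub (h : IsTreeSizeLaw p q) (a : ℝ) {s : ℝ} (hs : 0 < s) :
    ∑' n : ℕ, ENNReal.ofReal (q n) *
        ENNReal.ofReal (s ^ (a - 2) * (Real.exp (-s) - Real.exp (-(n * s)))) =
      ENNReal.ofReal (s ^ (a - 2) * (Real.exp (-s) - genFun q (Real.exp (-s)))) := by
  have hz := Ioo_subset_Icc_self (exp_neg_mem_Ioo hs)
  have hpow : ∀ n : ℕ, Real.exp (-(n * s)) = Real.exp (-s) ^ n := fun n => by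
    rw [← Real.exp_nat_mul]; ring_nf
  have hsum : HasSum (fun n : ℕ => q n * (s ^ (a - 2) * (Real.exp (-s) - Real.exp (-(n * s)))))
      (s ^ (a - 2) * (Real.exp (-s) - genFun q (Real.exp (-s)))) := by
    have hq : HasSum q 1 := h.tsum_eq_one ▸ h.summable.hasSum
    have h2 := (summable_mul_pow h.nonneg h.summable hz).hasSum
    have := ((hq.mul_right (Real.exp (-s))).sub h2).mul_left (s ^ (a - 2))
    rw [one_mul] at this
    refine this.congr_fun ?_
    intro n
    rw [hpow]
    ring
  rw [← hsum.tsum_eq, ENNReal.ofReal_tsum_of_nonneg (fun n => ?_) hsum.summable]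
  · simp only [ENNReal.ofReal_mul (h.nonneg _)]
  · rcases Nat.eq_zero_or_pos n with rfl | hn
    · simp [h.zero]
    · refine mul_nonneg (h.nonneg n) (mul_nonneg (Real.rpow_nonneg hs.le _) ?_)
      rw [hpow, sub_nonneg]
      exact pow_le_of_le_one hz.1 hz.2 hn.ne'

lemma tsum_ofReal_eq_lintegral (h : IsTreeSizeLaw p q) {a : ℝ} (ha : 0 < a) :
    ∑' n : ℕ, ENNReal.ofReal (Real.Gamma a * (q n * ∫ t in (1 : ℝ)..n, t ^ (-a))) =
      ∫⁻ s in Ioi (0 : ℝ),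
        ENNReal.ofReal (s ^ (a - 2) * (Real.exp (-s) - genFun q (Real.exp (-s)))) := by
  rw [← setLIntegral_congr_fun measurableSet_Ioi fun s hs => h.tsum_ofReal_mul_exp_sub a hs,
    lintegral_tsum fun n => by fun_prop]
  congr 1 with n
  rw [lintegral_const_mul _ (by fun_prop)]
  rcases Nat.eq_zero_or_pos n with rfl | hn
  · simp [h.zero]
  · rw [← ofReal_Gamma_mul_integral_rpow_neg ha (by exact_mod_cast hn),
      ← ENNReal.ofReal_mul (h.nonneg n)]
    ring_nf

lemma lintegral_ne_top (h : IsTreeSizeLaw p q) {a : ℝ} (ha : 1 / 2 < a) :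
    ∫⁻ s in Ioi (0 : ℝ),
      ENNReal.ofReal (s ^ (a - 2) * (Real.exp (-s) - genFun q (Real.exp (-s)))) ≠ ⊤ := by
  obtain ⟨C, hC, hbd⟩ := h.exists_sub_le_sqrt
  have hint := (Real.GammaIntegral_convergent (sub_pos.2 ha)).const_mul C
  refine ne_top_of_le_ne_top hint.lintegral_lt_top.ne ?_
  refine setLIntegral_mono' measurableSet_Ioi fun s hs => ENNReal.ofReal_le_ofReal ?_
  have hs' : 0 < s := hs
  have hle : √(1 - Real.exp (-s)) ≤ √s :=
    Real.sqrt_le_sqrt (by linarith [Real.add_one_le_exp (-s)])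
  calc s ^ (a - 2) * (Real.exp (-s) - genFun q (Real.exp (-s)))
      ≤ s ^ (a - 2) * (C * (Real.exp (-s) * √s)) := by
        refine mul_le_mul_of_nonneg_left ?_ (Real.rpow_nonneg hs'.le _)
        exact (hbd _ (exp_neg_mem_Ioo hs')).trans (by gcongr)
    _ = C * (Real.exp (-s) * s ^ (a - 1 / 2 - 1)) := by
        rw [Real.sqrt_eq_rpow, show a - 1 / 2 - 1 = (a - 2) + 1 / 2 by ring,
          Real.rpow_add hs']
        ring

lemma summable_mul_integral (h : IsTreeSizeLaw p q) {a : ℝ} (ha : 1 / 2 < a) :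
    Summable fun n : ℕ => q n * ∫ t in (1 : ℝ)..n, t ^ (-a) := by
  have ha0 : 0 < a := by linarith
  have hΓ := Real.Gamma_pos_of_pos ha0
  have hs := ENNReal.summable_toReal ((h.tsum_ofReal_eq_lintegral ha0).trans_ne
    (h.lintegral_ne_top ha))
  simp only [ENNReal.toReal_ofReal (mul_nonneg hΓ.le (h.mul_integral_nonneg a _))] at hs
  exact (summable_mul_left_iff hΓ.ne').1 hs

end IsTreeSizeLaw

/-- Pointwise ordered generating functions order the sums `∑ qₙ ∫₁ⁿ t⁻ᵃ dt`. -/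
lemma tsum_mul_integral_lt {p₁ p₂ q₁ q₂ : ℕ → ℝ}
    (h₁ : IsTreeSizeLaw p₁ q₁) (h₂ : IsTreeSizeLaw p₂ q₂)
    (hle : ∀ z ∈ Ioo (0 : ℝ) 1, genFun q₁ z ≤ genFun q₂ z)
    (hlt : ∃ z ∈ Ioo (0 : ℝ) 1, genFun q₁ z < genFun q₂ z) {a : ℝ} (ha : 1 / 2 < a) :
    ∑' n : ℕ, q₂ n * ∫ t in (1 : ℝ)..n, t ^ (-a) <
      ∑' n : ℕ, q₁ n * ∫ t in (1 : ℝ)..n, t ^ (-a) := by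
  have ha0 : 0 < a := by linarith
  have hΓ := Real.Gamma_pos_of_pos ha0
  have hcont : ∀ {p q : ℕ → ℝ}, IsTreeSizeLaw p q →
      ContinuousOn (fun s : ℝ => genFun q (Real.exp (-s))) (Ioi 0) := fun h =>
    h.continuousOn.comp (by fun_prop) fun s hs => Ioo_subset_Icc_self (exp_neg_mem_Ioo hs)
  have hwcont : ContinuousOn (fun s : ℝ => s ^ (a - 2)) (Ioi 0) := fun s hs =>
    (Real.continuousAt_rpow_const _ _ (Or.inl (ne_of_gt hs))).continuousWithinAt
  set U := Ioi (0 : ℝ) ∩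
    (fun s => genFun q₂ (Real.exp (-s)) - genFun q₁ (Real.exp (-s))) ⁻¹' Ioi 0 with hU
  have hUopen : IsOpen U := ((hcont h₂).sub (hcont h₁)).isOpen_inter_preimage isOpen_Ioi isOpen_Ioi
  have hUne : U.Nonempty := by
    obtain ⟨z, hz, hzlt⟩ := hlt
    refine ⟨-Real.log z, ?_, ?_⟩
    · simpa using Real.log_neg hz.1 hz.2
    · simpa [Real.exp_log hz.1] using hzlt
  have hlint := lintegral_strict_mono_of_ae_le_of_ae_lt_on (μ := volume.restrict (Ioi (0 : ℝ)))
    (f := fun s => ENNReal.ofReal (s ^ (a - 2) * (Real.exp (-s) - genFun q₂ (Real.exp (-s)))))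
    (g := fun s => ENNReal.ofReal (s ^ (a - 2) * (Real.exp (-s) - genFun q₁ (Real.exp (-s)))))
    (s := U)
    (((hwcont.mul (ContinuousOn.sub (by fun_prop) (hcont h₁))).aemeasurable
      measurableSet_Ioi).ennreal_ofReal)
    (h₂.lintegral_ne_top ha) ?_ ?_ ?_
  · rw [← h₁.tsum_ofReal_eq_lintegral ha0, ← h₂.tsum_ofReal_eq_lintegral ha0] at hlint
    rw [← ENNReal.ofReal_tsum_of_nonneg, ← ENNReal.ofReal_tsum_of_nonneg, tsum_mul_left,
      tsum_mul_left] at hlint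
    · exact lt_of_mul_lt_mul_left (lt_of_not_ge fun hge => hlint.not_ge (ENNReal.ofReal_le_ofReal hge)) hΓ.le
    · exact fun n => mul_nonneg hΓ.le (h₁.mul_integral_nonneg a n)
    · exact (h₁.summable_mul_integral ha).mul_left _
    · exact fun n => mul_nonneg hΓ.le (h₂.mul_integral_nonneg a n)
    · exact (h₂.summable_mul_integral ha).mul_left _
  · filter_upwards [ae_restrict_mem measurableSet_Ioi] with s hs
    exact ENNReal.ofReal_le_ofReal (mul_le_mul_of_nonneg_left
      (sub_le_sub_left (hle _ (exp_neg_mem_Ioo hs)) _) (Real.rpow_nonneg (le_of_lt hs) _))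
  · rw [Measure.restrict_apply hUopen.measurableSet, inter_eq_left.2 inter_subset_left]
    exact (hUopen.measure_pos volume hUne).ne'
  · refine Filter.Eventually.of_forall fun s hs => ?_
    have hs0 : 0 < s := hs.1
    have hgap : genFun q₁ (Real.exp (-s)) < genFun q₂ (Real.exp (-s)) := sub_pos.1 hs.2
    have hw := Real.rpow_pos_of_pos hs0 (a - 2)
    have hlt' := mul_lt_mul_of_pos_left (sub_lt_sub_left hgap (Real.exp (-s))) hw
    refine (ENNReal.ofReal_lt_ofReal_iff_of_nonneg (mul_nonneg hw.le (sub_nonneg.2 ?_))).2 hlt'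
    exact h₂.genFun_le_self (Ioo_subset_Icc_self (exp_neg_mem_Ioo hs0))

lemma integral_rpow_neg_one_natCast {n : ℕ} (hn : 0 < n) :
    ∫ t in (1 : ℝ)..n, t ^ (-1 : ℝ) = Real.log n := by
  have h1 : (1 : ℝ) ≤ n := by exact_mod_cast hn
  have h0 : (0 : ℝ) ∉ uIcc (1 : ℝ) n := by
    rw [uIcc_of_le h1]
    exact fun h => absurd h.1 (by norm_num)
  simp only [Real.rpow_neg_one]
  rw [integral_inv h0, div_one]

lemma natCast_rpow_eq_one_add {n : ℕ} (hn : 0 < n) {α : ℝ} (hα : α ≠ 0) :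
    (n : ℝ) ^ α = 1 + α * ∫ t in (1 : ℝ)..n, t ^ (-(1 - α)) := by
  have h1 : (1 : ℝ) ≤ n := by exact_mod_cast hn
  have h0 : (0 : ℝ) ∉ uIcc (1 : ℝ) n := by
    rw [uIcc_of_le h1]
    exact fun h => absurd h.1 (by norm_num)
  rw [integral_rpow (Or.inr ⟨fun h => hα (by linarith), h0⟩),
    show -(1 - α) + 1 = α by ring, Real.one_rpow]
  field_simp
  ring

namespace IsTreeSizeLaw

variable {p q : ℕ → ℝ}

lemma tsum_rpow_mul (h : IsTreeSizeLaw p q) {α : ℝ} (hα : α ≠ 0) (hα' : α < 1 / 2) :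
    ∑' n : ℕ, (n : ℝ) ^ α * q n =
      1 + α * ∑' n : ℕ, q n * ∫ t in (1 : ℝ)..n, t ^ (-(1 - α)) := by
  have hs := h.summable_mul_integral (a := 1 - α) (by linarith)
  rw [← tsum_mul_left]
  nth_rewrite 1 [← h.tsum_eq_one]
  rw [← h.summable.tsum_add (hs.mul_left α)]
  congr 1 with n
  rcases Nat.eq_zero_or_pos n with rfl | hn
  · simp [h.zero]
  · rw [natCast_rpow_eq_one_add hn hα]
    ring

lemma tsum_mul_log (h : IsTreeSizeLaw p q) :
    ∑' n : ℕ, q n * Real.log n = ∑' n : ℕ, q n * ∫ t in (1 : ℝ)..n, t ^ (-1 : ℝ) := by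
  congr 1 with n
  rcases Nat.eq_zero_or_pos n with rfl | hn
  · simp [h.zero]
  · rw [integral_rpow_neg_one_natCast hn]

end IsTreeSizeLaw

lemma exists_two_le_pos_of_variance_pos {p : ℕ → ℝ} (hp : ∀ k, 0 ≤ p k)
    (hσ : 0 < ∑' k : ℕ, (k : ℝ) * ((k : ℝ) - 1) * p k) : ∃ k, 2 ≤ k ∧ 0 < p k := by
  by_contra! hc
  have hzero : ∀ k : ℕ, (k : ℝ) * ((k : ℝ) - 1) * p k = 0 := fun k => by
    rcases Nat.lt_or_ge k 2 with hk | hk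
    · interval_cases k <;> simp
    · rw [le_antisymm (hc k hk) (hp k), mul_zero]
  simp [hzero] at hσ

/-- Theorem 6.7 of the paper. If two critical offspring distributions with
variances in `(0,∞)` satisfy `Φ₁ ≤ Φ₂` on `(0,1)` with strict inequality at some point, then
`μ₁(α) < μ₂(α)` for `α < 0`, `μ₁(α) > μ₂(α)` for `0 < α < 1/2`, and `μ₁' > μ₂'`. -/
theorem stmt9
    (p₁ p₂ : ℕ → ℝ) (hp₁ : ∀ k, 0 ≤ p₁ k) (hp₂ : ∀ k, 0 ≤ p₂ k)
    (hpsum₁ : ∑' k, p₁ k = 1) (hpsum₂ : ∑' k, p₂ k = 1)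
    (hcrit₁ : ∑' k : ℕ, (k : ℝ) * p₁ k = 1) (hcrit₂ : ∑' k : ℕ, (k : ℝ) * p₂ k = 1)
    (hσfin₁ : Summable (fun k : ℕ => (k : ℝ) * ((k : ℝ) - 1) * p₁ k))
    (hσfin₂ : Summable (fun k : ℕ => (k : ℝ) * ((k : ℝ) - 1) * p₂ k))
    (hσpos₁ : 0 < ∑' k : ℕ, (k : ℝ) * ((k : ℝ) - 1) * p₁ k)
    (hσpos₂ : 0 < ∑' k : ℕ, (k : ℝ) * ((k : ℝ) - 1) * p₂ k)
    (q₁ q₂ : ℕ → ℝ)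
    (hq₁0 : q₁ 0 = 0) (hq₂0 : q₂ 0 = 0)
    (hq₁nn : ∀ n, 0 ≤ q₁ n) (hq₂nn : ∀ n, 0 ≤ q₂ n)
    (hq₁sum : ∑' n, q₁ n = 1) (hq₂sum : ∑' n, q₂ n = 1)
    (hfix₁ : ∀ z ∈ Set.Icc (0:ℝ) 1,
      (∑' n, q₁ n * z ^ n) = z * ∑' k, p₁ k * (∑' n, q₁ n * z ^ n) ^ k)
    (hfix₂ : ∀ z ∈ Set.Icc (0:ℝ) 1,
      (∑' n, q₂ n * z ^ n) = z * ∑' k, p₂ k * (∑' n, q₂ n * z ^ n) ^ k)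
    (hΦ : ∀ t ∈ Set.Ioo (0:ℝ) 1, (∑' k, p₁ k * t ^ k) ≤ ∑' k, p₂ k * t ^ k)
    (hΦstrict : ∃ t₀ ∈ Set.Ioo (0:ℝ) 1, (∑' k, p₁ k * t₀ ^ k) < ∑' k, p₂ k * t₀ ^ k) :
    (∀ α : ℝ, α < 0 →
      (∑' n : ℕ, (n : ℝ) ^ α * q₁ n) < ∑' n : ℕ, (n : ℝ) ^ α * q₂ n) ∧
    (∀ α : ℝ, 0 < α → α < 1/2 →
      (∑' n : ℕ, (n : ℝ) ^ α * q₂ n) < ∑' n : ℕ, (n : ℝ) ^ α * q₁ n) ∧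
    ((∑' n : ℕ, q₂ n * Real.log n) < ∑' n : ℕ, q₁ n * Real.log n) := by
  have h₁ : IsTreeSizeLaw p₁ q₁ := ⟨hp₁, hpsum₁, hcrit₁,
    exists_two_le_pos_of_variance_pos hp₁ hσpos₁, hq₁0, hq₁nn, hq₁sum, hfix₁⟩
  have h₂ : IsTreeSizeLaw p₂ q₂ := ⟨hp₂, hpsum₂, hcrit₂,
    exists_two_le_pos_of_variance_pos hp₂ hσpos₂, hq₂0, hq₂nn, hq₂sum, hfix₂⟩
  have hle : ∀ z ∈ Ioo (0 : ℝ) 1, genFun q₁ z ≤ genFun q₂ z := fun z hz =>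
    genFun_le_genFun h₁ h₂ hz (hΦ _ (h₁.genFun_mem_Ioo hz))
  have hlt : ∃ z ∈ Ioo (0 : ℝ) 1, genFun q₁ z < genFun q₂ z := by
    obtain ⟨t₀, ht₀, hlt₀⟩ := hΦstrict
    obtain ⟨z, hz, rfl⟩ := h₁.exists_genFun_eq ht₀
    exact ⟨z, hz, genFun_lt_genFun h₁ h₂ hz hlt₀⟩
  refine ⟨fun α hα => ?_, fun α hα hα' => ?_, ?_⟩
  · have hα' : α < 1 / 2 := by linarith
    have hI := tsum_mul_integral_lt h₁ h₂ hle hlt (a := 1 - α) (by linarith)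
    rw [h₁.tsum_rpow_mul hα.ne hα', h₂.tsum_rpow_mul hα.ne hα']
    linarith [mul_lt_mul_of_neg_left hI hα]
  · have hI := tsum_mul_integral_lt h₁ h₂ hle hlt (a := 1 - α) (by linarith)
    rw [h₁.tsum_rpow_mul hα.ne' hα', h₂.tsum_rpow_mul hα.ne' hα']
    linarith [mul_lt_mul_of_pos_left hI hα]
  · rw [h₁.tsum_mul_log, h₂.tsum_mul_log]
    exact tsum_mul_integral_lt h₁ h₂ hle hlt (by norm_num)
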